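/- arXiv:2202.09699 — 4 statements merged into one kernel-verified Lean document; each statement's English description precedes it below -/
import Mathlib

section
/- Forward–backward view equivalence for eligibility traces (finite horizon). Let T be a natural number, let r : ℕ → ℝ and c : ℕ → ℝ be real sequences, and let g : ℕ → ℝ^d be a sequence of vectors. Define G : ℕ → ℝ backward by G(T) = r(T) and G(t) = r(t) + c(t+1) · G(t+1) for t < T, and define the eligibility trace e : ℕ → ℝ^d forward by e(0) = g(0) and e(t) = c(t) • e(t−1) + g(t) for 1 ≤ t ≤ T. Then ∑_{t=0}^{T} G(t) • g(t) = ∑_{t=0}^{T} r(t) • e(t) (equality of vectors in ℝ^d). -/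
/-- Forward–backward view equivalence for eligibility traces (finite horizon). -/
theorem forward_backward_equivalence (d T : ℕ) (r c : ℕ → ℝ) (g : ℕ → (Fin d → ℝ))
    (G : ℕ → ℝ) (hGT : G T = r T)
    (hG : ∀ t, t < T → G t = r t + c (t + 1) * G (t + 1))
    (e : ℕ → (Fin d → ℝ)) (he0 : e 0 = g 0)
    (he : ∀ t, 1 ≤ t → t ≤ T → e t = c t • e (t - 1) + g t) :
    ∑ t ∈ Finset.range (T + 1), G t • g t = ∑ t ∈ Finset.range (T + 1), r t • e t := by
  have key : ∀ n, n ≤ T → ∑ t ∈ Finset.range (n + 1), G t • g t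
      = ∑ t ∈ Finset.range n, r t • e t + G n • e n := by
    intro n
    induction n with
    | zero => intro _; simp [he0]
    | succ n ih =>
      intro hn
      rw [Finset.sum_range_succ, ih (by omega), Finset.sum_range_succ _ n,
        he (n + 1) (by omega) hn, hG n (by omega), Nat.add_sub_cancel]
      module
  rw [key T le_rfl, hGT, ← Finset.sum_range_succ]
end

section
/- Column sums of the key matrix of selective TD(λ, ω). Let S be a nonempty finite type, P a row-stochastic S×S real matrix with stationary distribution d, and Γ, Λ diagonal S×S matrices with diagonal entries γ(s), λ(s) ∈ [0,1] such that γ(s)·λ(s) < 1 for all s. Let D be the diagonal matrix with entries d(s), and define the key matrix K = D·(I − Γ·Λ)·(I − P·Γ·Λ)^{-1}·(I − P·Γ). Then for every state s', ∑_{s} K(s, s') = d(s')·(1 − γ(s')); equivalently 1^⊤ K = d^⊤ (I − Γ). In particular, if d(s) > 0 and γ(s) < 1 for all s, then every column sum of K is positive. -/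
/-- Column sums of the key matrix of selective TD(λ, ω). -/
theorem key_matrix_column_sums
    {S : Type*} [Fintype S] [Nonempty S] [DecidableEq S]
    (P : Matrix S S ℝ)
    (hP_nonneg : ∀ s s', 0 ≤ P s s') (hP_row : ∀ s, ∑ s', P s s' = 1)
    (d : S → ℝ) (hd_nonneg : ∀ s, 0 ≤ d s) (hd_sum : ∑ s, d s = 1)
    (hd_stat : ∀ s', ∑ s, d s * P s s' = d s')
    (γ lam : S → ℝ)
    (hγ : ∀ s, 0 ≤ γ s ∧ γ s ≤ 1) (hlam : ∀ s, 0 ≤ lam s ∧ lam s ≤ 1)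
    (hγlam : ∀ s, γ s * lam s < 1)
    (Γ Λ D K : Matrix S S ℝ)
    (hΓ : Γ = Matrix.diagonal γ) (hΛ : Λ = Matrix.diagonal lam)
    (hD : D = Matrix.diagonal d)
    (hK : K = D * (1 - Γ * Λ) * (1 - P * Γ * Λ)⁻¹ * (1 - P * Γ)) :
    (∀ s', ∑ s, K s s' = d s' * (1 - γ s'))
      ∧ ((∀ s, 0 < d s) → (∀ s, γ s < 1) → ∀ s', 0 < ∑ s, K s s') := by
  have hdP : Matrix.vecMul d P = d := by
    ext s
    simpa [Matrix.vecMul, dotProduct] using hd_stat s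
  have hdet : (1 - P * Γ * Λ).det ≠ 0 := by
    apply det_ne_zero_of_sum_row_lt_diag
    intro k
    have hent : ∀ j, (P * Γ * Λ) k j = P k j * (γ j * lam j) := by
      intro j
      rw [hΓ, hΛ, Matrix.mul_diagonal, Matrix.mul_diagonal, mul_assoc]
    have hg : ∀ j, 0 ≤ γ j * lam j := fun j => mul_nonneg (hγ j).1 (hlam j).1
    have hsum : ∑ j, P k j * (γ j * lam j) < 1 := by
      rw [← hP_row k]
      apply Finset.sum_lt_sum
      · intro j _
        exact mul_le_of_le_one_right (hP_nonneg k j) (hγlam j).le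
      · by_contra! hcon
        have h0 : ∀ j, P k j = 0 := by
          intro j
          have h1 := hcon j (Finset.mem_univ j)
          have h2 := hP_nonneg k j
          have h3 := hγlam j
          nlinarith
        have := hP_row k
        simp [h0] at this
    have heq : ∑ j ∈ Finset.univ.erase k, ‖(1 - P * Γ * Λ) k j‖
        = ∑ j ∈ Finset.univ.erase k, P k j * (γ j * lam j) := by
      apply Finset.sum_congr rfl
      intro j hj
      have hne : k ≠ j := (Finset.ne_of_mem_erase hj).symm
      rw [Matrix.sub_apply, hent, Matrix.one_apply_ne hne, zero_sub, norm_neg,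
        Real.norm_of_nonneg (mul_nonneg (hP_nonneg k j) (hg j))]
    rw [heq, Matrix.sub_apply, hent, Matrix.one_apply_eq]
    rw [← Finset.add_sum_erase _ _ (Finset.mem_univ k)] at hsum
    exact lt_of_lt_of_le (by linarith) (Real.le_norm_self _)
  have hcol : ∀ s', ∑ s, K s s' = d s' * (1 - γ s') := by
    have h1 : Matrix.vecMul (fun _ => (1 : ℝ)) (D * (1 - Γ * Λ))
        = Matrix.vecMul d (1 - P * Γ * Λ) := by
      have : Matrix.vecMul (fun _ => (1 : ℝ)) D = d := by
        ext s
        simp [hD, Matrix.vecMul_diagonal]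
      rw [← Matrix.vecMul_vecMul, this, Matrix.vecMul_sub, Matrix.vecMul_sub, mul_assoc P,
        ← Matrix.vecMul_vecMul d P, hdP]
    have h2 : Matrix.vecMul (fun _ => (1 : ℝ)) K = Matrix.vecMul d (1 - Γ) := by
      rw [hK, ← Matrix.vecMul_vecMul, ← Matrix.vecMul_vecMul, h1, Matrix.vecMul_vecMul d (1 - P * Γ * Λ),
        Matrix.mul_nonsing_inv _ (isUnit_iff_ne_zero.mpr hdet), Matrix.vecMul_one,
        Matrix.vecMul_sub, Matrix.vecMul_sub, ← Matrix.vecMul_vecMul d P, hdP]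
    intro s'
    have h3 := congrFun h2 s'
    rw [Matrix.vecMul_sub, hΓ, Matrix.vecMul_one, Pi.sub_apply, Matrix.vecMul_diagonal] at h3
    simp only [Matrix.vecMul, dotProduct, one_mul] at h3
    rw [h3]
    ring
  refine ⟨hcol, fun hd hg s' => ?_⟩
  rw [hcol]
  exact mul_pos (hd s') (sub_pos.mpr (hg s'))
end

section
/- Componentwise bound on the follow-on vector under a bounded state-dependent discount. Let S be a nonempty finite type, P a row-stochastic S×S real matrix with stationary distribution d, and Γ a diagonal S×S matrix with diagonal entries γ(s) satisfying 0 ≤ γ(s) ≤ β for some β < 1. Then for every k ≥ 0 the vector (Γ P^⊤)^k d is componentwise at most β^k · d; consequently I − Γ P^⊤ is invertible and the vector d^f = (I − Γ P^⊤)^{-1} d = ∑_{k=0}^{∞} (Γ P^⊤)^k d satisfies d^f(s) ≤ (1 − β)^{-1} d(s) for every state s. -/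
open Matrix

/-- Componentwise bound on the follow-on vector under a bounded state-dependent discount. -/
theorem followon_componentwise_bound
    {S : Type*} [Fintype S] [Nonempty S] [DecidableEq S]
    (P : Matrix S S ℝ)
    (hP_nonneg : ∀ s s', 0 ≤ P s s') (hP_row : ∀ s, ∑ s', P s s' = 1)
    (d : S → ℝ) (hd_nonneg : ∀ s, 0 ≤ d s) (hd_sum : ∑ s, d s = 1)
    (hd_stat : ∀ s', ∑ s, d s * P s s' = d s')
    (γ : S → ℝ) (β : ℝ) (hβ : β < 1) (hγ : ∀ s, 0 ≤ γ s ∧ γ s ≤ β)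
    (Γ : Matrix S S ℝ) (hΓ : Γ = Matrix.diagonal γ) :
    (∀ k : ℕ, ∀ s, ((Γ * Pᵀ) ^ k).mulVec d s ≤ β ^ k * d s)
      ∧ IsUnit (1 - Γ * Pᵀ)
      ∧ (1 - Γ * Pᵀ)⁻¹.mulVec d = ∑' k : ℕ, ((Γ * Pᵀ) ^ k).mulVec d
      ∧ ∀ s, (1 - Γ * Pᵀ)⁻¹.mulVec d s ≤ (1 - β)⁻¹ * d s := by
  have hβ0 : 0 ≤ β := by
    obtain ⟨s⟩ := ‹Nonempty S›
    exact (hγ s).1.trans (hγ s).2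
  set M := Γ * Pᵀ with hM
  have hMe : ∀ s s', M s s' = γ s * P s' s := by
    intro s s'
    rw [hM, hΓ, Matrix.diagonal_mul, Matrix.transpose_apply]
  have hMnn : ∀ s s', 0 ≤ M s s' := fun s s' => by
    rw [hMe]; exact mul_nonneg (hγ s).1 (hP_nonneg _ _)
  have hMv : ∀ v : S → ℝ, ∀ s, (M *ᵥ v) s = ∑ s', M s s' * v s' := fun v s => rfl
  have hsucc : ∀ (k : ℕ) (v : S → ℝ), (M ^ (k+1)) *ᵥ v = M *ᵥ ((M ^ k) *ᵥ v) := by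
    intro k v
    rw [Matrix.mulVec_mulVec, pow_succ']
  have hMd : ∀ s, (M *ᵥ d) s = γ s * d s := by
    intro s
    rw [hMv, ← hd_stat s, Finset.mul_sum]
    refine Finset.sum_congr rfl fun s' _ => ?_
    rw [hMe]; ring
  have hnn : ∀ k : ℕ, ∀ s, 0 ≤ ((M ^ k) *ᵥ d) s := by
    intro k
    induction k with
    | zero => simpa using hd_nonneg
    | succ k ih =>
      intro s
      rw [hsucc, hMv]
      exact Finset.sum_nonneg fun s' _ => mul_nonneg (hMnn _ _) (ih s')
  have hle : ∀ k : ℕ, ∀ s, ((M ^ k) *ᵥ d) s ≤ β ^ k * d s := by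
    intro k
    induction k with
    | zero => intro s; simp
    | succ k ih =>
      intro s
      rw [hsucc, hMv]
      calc ∑ s', M s s' * ((M ^ k) *ᵥ d) s' ≤ ∑ s', M s s' * (β ^ k * d s') :=
            Finset.sum_le_sum fun s' _ => mul_le_mul_of_nonneg_left (ih s') (hMnn _ _)
        _ = β ^ k * (M *ᵥ d) s := by
            rw [hMv, Finset.mul_sum]
            exact Finset.sum_congr rfl fun s' _ => by ring
        _ = β ^ k * (γ s * d s) := by rw [hMd]
        _ ≤ β ^ k * (β * d s) := by
            have := hd_nonneg s
            have := (hγ s).2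
            gcongr
        _ = β ^ (k+1) * d s := by ring
  have hl1 : ∀ v : S → ℝ, ∑ s, |(M *ᵥ v) s| ≤ β * ∑ s, |v s| := by
    intro v
    calc ∑ s, |(M *ᵥ v) s| ≤ ∑ s, ∑ s', M s s' * |v s'| := by
          refine Finset.sum_le_sum fun s _ => ?_
          rw [hMv]
          refine (Finset.abs_sum_le_sum_abs _ _).trans (le_of_eq ?_)
          refine Finset.sum_congr rfl fun s' _ => ?_
          rw [abs_mul, abs_of_nonneg (hMnn _ _)]
      _ = ∑ s', (∑ s, M s s') * |v s'| := by
          rw [Finset.sum_comm]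
          exact Finset.sum_congr rfl fun s' _ => by rw [Finset.sum_mul]
      _ ≤ ∑ s', β * |v s'| := by
          refine Finset.sum_le_sum fun s' _ => mul_le_mul_of_nonneg_right ?_ (abs_nonneg _)
          calc ∑ s, M s s' ≤ ∑ s, β * P s' s := by
                refine Finset.sum_le_sum fun s _ => ?_
                rw [hMe]
                exact mul_le_mul_of_nonneg_right (hγ s).2 (hP_nonneg _ _)
            _ = β := by rw [← Finset.mul_sum, hP_row, mul_one]
      _ = β * ∑ s, |v s| := by rw [Finset.mul_sum]
  have hl1k : ∀ (v : S → ℝ) (k : ℕ), ∑ s, |((M ^ k) *ᵥ v) s| ≤ β ^ k * ∑ s, |v s| := by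
    intro v k
    induction k with
    | zero => simp
    | succ k ih =>
      rw [hsucc, pow_succ', mul_assoc]
      exact (hl1 _).trans (mul_le_mul_of_nonneg_left ih hβ0)
  have hunit : IsUnit (1 - M) := by
    rw [← Matrix.mulVec_injective_iff_isUnit]
    intro v w hvw
    have h0 : M *ᵥ (v - w) = v - w := by
      have h : (1 - M) *ᵥ v = (1 - M) *ᵥ w := hvw
      rw [Matrix.sub_mulVec, Matrix.sub_mulVec, Matrix.one_mulVec, Matrix.one_mulVec] at h
      rw [Matrix.mulVec_sub]
      linear_combination (exp := 1) -h
    have h1 := hl1 (v - w)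
    rw [h0] at h1
    have hn : 0 ≤ ∑ s, |(v - w) s| := Finset.sum_nonneg fun s _ => abs_nonneg _
    have hz : ∑ s, |(v - w) s| = 0 := by nlinarith
    rw [Finset.sum_eq_zero_iff_of_nonneg fun s _ => abs_nonneg _] at hz
    funext s
    have := abs_eq_zero.mp (hz s (Finset.mem_univ s))
    simpa [sub_eq_zero] using this
  have hdet : IsUnit (1 - M).det := (Matrix.isUnit_iff_isUnit_det _).mp hunit
  set x := (1 - M)⁻¹ *ᵥ d with hx
  have hxd : (1 - M) *ᵥ x = d := by
    rw [hx, Matrix.mulVec_mulVec, Matrix.mul_nonsing_inv _ hdet, Matrix.one_mulVec]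
  have hpart : ∀ n : ℕ, ∀ s, ∑ k ∈ Finset.range n, ((M ^ k) *ᵥ d) s = x s - ((M ^ n) *ᵥ x) s := by
    intro n s
    induction n with
    | zero => simp
    | succ n ih =>
      have h : (M ^ n) *ᵥ d = (M ^ n) *ᵥ x - (M ^ (n+1)) *ᵥ x := by
        rw [← Matrix.sub_mulVec, ← hxd, Matrix.mulVec_mulVec, mul_sub, mul_one, pow_succ]
      rw [Finset.sum_range_succ, ih, h, Pi.sub_apply]
      ring
  have htend : ∀ s, Filter.Tendsto (fun n : ℕ => ((M ^ n) *ᵥ x) s) Filter.atTop (nhds 0) := by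
    intro s
    refine squeeze_zero_norm (a := fun n => β ^ n * ∑ s, |x s|) (fun n => ?_) ?_
    · refine le_trans ?_ (hl1k x n)
      exact Finset.single_le_sum (f := fun s => |((M ^ n) *ᵥ x) s|)
        (fun s _ => abs_nonneg _) (Finset.mem_univ s)
    · simpa using (tendsto_pow_atTop_nhds_zero_of_lt_one hβ0 hβ).mul_const (∑ s, |x s|)
  have hsum : ∀ s, HasSum (fun k : ℕ => ((M ^ k) *ᵥ d) s) (x s) := by
    intro s
    rw [hasSum_iff_tendsto_nat_of_nonneg fun k => hnn k s]
    simp_rw [hpart]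
    simpa using (htend s).const_sub (x s)
  refine ⟨hle, hunit, ?_, fun s => ?_⟩
  · exact (Pi.hasSum.mpr hsum).tsum_eq.symm
  · exact hasSum_le (fun k => hle k s) (hsum s)
      ((hasSum_geometric_of_lt_one hβ0 hβ).mul_right (d s))
end

section
/- Sparse expected eligibility traces are temporally extended backward models. Let S be a nonempty finite type, let P̄ be a row-stochastic S×S real matrix (the time-reversed transition kernel), let γ, λ : S → ℝ satisfy 0 ≤ γ(s)λ(s) ≤ β for some β < 1, define ω(s) = 1 − γ(s)λ(s), and let C be an S×n real matrix (the cumulant, whose row at state s is the gradient ∇V(s)). Write Δ_{γλ} and Δ_ω for the diagonal matrices with entries γ(s)λ(s) and ω(s). Then there is a unique S×n matrix Z satisfying Z = Δ_ω·C + Δ_{γλ}·P̄·Z, namely Z = (I − Δ_{γλ}·P̄)^{-1}·Δ_ω·C = ∑_{k=0}^{∞} ((I − Δ_ω)·P̄)^k · Δ_ω · C, and this Z also satisfies the backward-option-model equation Z = Δ_ω·C + (I − Δ_ω)·P̄·Z. -/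
open Matrix

section helper
attribute [local instance] Matrix.linftyOpNormedRing Matrix.linftyOpNormedAlgebra

theorem neumann_aux {S : Type*} [Fintype S] [DecidableEq S] (A : Matrix S S ℝ) (β : ℝ)
    (hβ0 : 0 ≤ β) (hβ : β < 1) (h : ∀ s, ∑ s', |A s s'| ≤ β) :
    ∃ B : Matrix S S ℝ, (1 - A) * B = 1 ∧ HasSum (fun k : ℕ => A ^ k) B := by
  have hn : ‖A‖ < 1 := by
    refine lt_of_le_of_lt ?_ hβ
    rw [Matrix.linfty_opNorm_def]
    have : (Finset.univ.sup fun i : S => ∑ j : S, ‖A i j‖₊) ≤ (⟨β, hβ0⟩ : NNReal) := by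
      refine Finset.sup_le fun i _ => ?_
      refine NNReal.coe_le_coe.mp ?_
      rw [NNReal.coe_sum]
      exact h i
    exact_mod_cast this
  haveI : CompleteSpace (Matrix S S ℝ) := FiniteDimensional.complete ℝ _
  exact ⟨_, mul_neg_geom_series A hn, (summable_geometric_of_norm_lt_one hn).hasSum⟩

end helper

/-- Sparse expected eligibility traces are temporally extended backward models. -/
theorem sparse_expected_traces_are_backward_models
    {S : Type*} [Fintype S] [Nonempty S] [DecidableEq S] (n : ℕ)
    (Pbar : Matrix S S ℝ)
    (hP_nonneg : ∀ s s', 0 ≤ Pbar s s') (hP_row : ∀ s, ∑ s', Pbar s s' = 1)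
    (γ lam : S → ℝ) (β : ℝ) (hβ : β < 1)
    (hγlam : ∀ s, 0 ≤ γ s * lam s ∧ γ s * lam s ≤ β)
    (ω : S → ℝ) (hω : ∀ s, ω s = 1 - γ s * lam s)
    (C : Matrix S (Fin n) ℝ)
    (Dγl Dω : Matrix S S ℝ)
    (hDγl : Dγl = Matrix.diagonal (fun s => γ s * lam s))
    (hDω : Dω = Matrix.diagonal ω) :
    (∃! Z : Matrix S (Fin n) ℝ, Z = Dω * C + Dγl * Pbar * Z)
      ∧ ((1 - Dγl * Pbar)⁻¹ * (Dω * C)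
          = Dω * C + Dγl * Pbar * ((1 - Dγl * Pbar)⁻¹ * (Dω * C)))
      ∧ ((1 - Dγl * Pbar)⁻¹ * (Dω * C)
          = ∑' k : ℕ, ((1 - Dω) * Pbar) ^ k * (Dω * C))
      ∧ ((1 - Dγl * Pbar)⁻¹ * (Dω * C)
          = Dω * C + (1 - Dω) * Pbar * ((1 - Dγl * Pbar)⁻¹ * (Dω * C))) := by
  have hD : 1 - Dω = Dγl := by
    subst hDγl hDω
    rw [← Matrix.diagonal_one, Matrix.diagonal_sub]
    congr 1
    funext s
    simp [hω s]
  obtain ⟨s0⟩ := ‹Nonempty S›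
  have hβ0 : 0 ≤ β := (hγlam s0).1.trans (hγlam s0).2
  obtain ⟨B, hB, hsum⟩ := neumann_aux (Dγl * Pbar) β hβ0 hβ (by
    intro s
    have : ∀ s', |(Dγl * Pbar) s s'| = γ s * lam s * Pbar s s' := by
      intro s'
      rw [hDγl, Matrix.diagonal_mul, abs_of_nonneg (mul_nonneg (hγlam s).1 (hP_nonneg s s'))]
    simp only [this]
    rw [← Finset.mul_sum, hP_row, mul_one]
    exact (hγlam s).2)
  rw [hD, Matrix.inv_eq_right_inv hB]
  have hB' : B * (1 - Dγl * Pbar) = 1 := mul_eq_one_comm.mp hB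
  have hfix : B * (Dω * C) = Dω * C + Dγl * Pbar * (B * (Dω * C)) := by
    have h1 : (1 - Dγl * Pbar) * (B * (Dω * C)) = Dω * C := by
      rw [← Matrix.mul_assoc, hB, Matrix.one_mul]
    rw [Matrix.sub_mul, Matrix.one_mul] at h1
    exact sub_eq_iff_eq_add.mp h1
  refine ⟨⟨B * (Dω * C), hfix, ?_⟩, hfix, ?_, hfix⟩
  · intro Z hZ
    have h1 : (1 - Dγl * Pbar) * Z = Dω * C := by
      rw [Matrix.sub_mul, Matrix.one_mul]
      exact sub_eq_iff_eq_add.mpr hZ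
    rw [← h1, ← Matrix.mul_assoc, hB', Matrix.one_mul]
  · have hc : Continuous (fun M : Matrix S S ℝ => M * (Dω * C)) :=
      continuous_id.matrix_mul continuous_const
    exact (hsum.map (AddMonoidHom.mk' (fun M : Matrix S S ℝ => M * (Dω * C))
      (fun a b => Matrix.add_mul a b _)) hc).tsum_eq.symm
end
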